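/- arXiv:2508.07400 — 2 statements merged into one kernel-verified Lean document; each statement's English description precedes it below -/
import Mathlib

section
/- Let π be a positive policy and let g be its greedy switch sequence, and let k* be the least index i with g(i) = 0 (which exists and satisfies k* ≤ H). Then: (a) the greedy intervals [g(i+1), g(i)) for 0 ≤ i < k* form a partition of {0,…,H−1} into k* intervals each of which is feasible for π; and (b) for every k ≥ 1 and every s : {0,…,k} → ℕ with s_0 = H, s_k = 0, s_{i+1} < s_i for all i < k, and [s_{i+1}, s_i) feasible for π for every i < k, one has k ≥ k*. Hence the greedy partition uses the minimum possible number of feasible intervals, i.e., it corresponds to a reward inducing π with the minimum number of switches. (Optimality claim of Theorem 1.) -/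
/-- A time-invariant certificate on `[i,j)` with terminal value `νo` for the
policy `π`: a pair `(r, ν)` with `r : S × A → ℝ` and `ν` defined on
`{i,…,j} × S` such that `ν_j = νo` and, for all `i ≤ t < j`, `s`, `a`,
`r(s,a) = log π_t(a|s) − γ Σ_{s'} T(s'|s,a) ν_{t+1}(s') + ν_t(s)`. -/
def IsCert {S A : Type*} [Fintype S] (T : S → A → S → ℝ) (γ : ℝ)
    (π : ℕ → S → A → ℝ) (i j : ℕ) (νo : S → ℝ)
    (r : S → A → ℝ) (ν : ℕ → S → ℝ) : Prop :=
  (∀ s, ν j s = νo s) ∧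
  ∀ t, i ≤ t → t < j → ∀ s a,
    r s a = Real.log (π t s a)
      - γ * (∑ s' : S, T s a s' * ν (t + 1) s') + ν t s

/-- The interval `[i,j)` is feasible for `π` if a time-invariant certificate on
`[i,j)` exists with some terminal value. -/
def Feasible {S A : Type*} [Fintype S] (T : S → A → S → ℝ) (γ : ℝ)
    (π : ℕ → S → A → ℝ) (i j : ℕ) : Prop :=
  ∃ (νo : S → ℝ) (r : S → A → ℝ) (ν : ℕ → S → ℝ), IsCert T γ π i j νo r ν

/-- The greedy switch sequence of `π`: `g 0 = H`; if `g i = 0` then `g (i+1) = 0`,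
otherwise `g (i+1)` is the least `t` such that `[t, g i)` is feasible for `π`. -/
noncomputable def greedy {S A : Type*} [Fintype S] (T : S → A → S → ℝ) (γ : ℝ)
    (π : ℕ → S → A → ℝ) (H : ℕ) : ℕ → ℕ
  | 0 => H
  | (i + 1) =>
      if greedy T γ π H i = 0 then 0
      else sInf {t | Feasible T γ π t (greedy T γ π H i)}

/-- Feasibility is inherited by intervals sharing the left endpoint and ending earlier. -/
theorem Feasible.anti_right {S A : Type*} [Fintype S] {T : S → A → S → ℝ} {γ : ℝ}
    {π : ℕ → S → A → ℝ} {i j j' : ℕ} (h : Feasible T γ π i j) (hj : j' ≤ j) :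
    Feasible T γ π i j' := by
  obtain ⟨_, r, ν, -, hν⟩ := h
  exact ⟨ν j', r, ν, fun _ => rfl, fun t hi ht => hν t hi (ht.trans_le hj)⟩

/-- Every interval of length one is feasible, with zero values after the step. -/
theorem feasible_succ {S A : Type*} [Fintype S] (T : S → A → S → ℝ) (γ : ℝ)
    (π : ℕ → S → A → ℝ) (i : ℕ) : Feasible T γ π i (i + 1) := by
  refine ⟨0, fun s a => Real.log (π i s a), 0, fun _ => rfl, fun t hi ht s a => ?_⟩
  obtain rfl : t = i := by omega
  simp

theorem greedy_succ_of_ne_zero {S A : Type*} [Fintype S] (T : S → A → S → ℝ) (γ : ℝ)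
    (π : ℕ → S → A → ℝ) (H : ℕ) {i : ℕ} (h : greedy T γ π H i ≠ 0) :
    greedy T γ π H (i + 1) = sInf {t | Feasible T γ π t (greedy T γ π H i)} := by
  rw [greedy, if_neg h]

theorem feasible_pred_greedy {S A : Type*} [Fintype S] (T : S → A → S → ℝ) (γ : ℝ)
    (π : ℕ → S → A → ℝ) (H : ℕ) {i : ℕ} (h : greedy T γ π H i ≠ 0) :
    Feasible T γ π (greedy T γ π H i - 1) (greedy T γ π H i) := by
  simpa only [Nat.sub_add_cancel (Nat.one_le_iff_ne_zero.mpr h)] using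
    feasible_succ T γ π (greedy T γ π H i - 1)

theorem greedy_succ_lt {S A : Type*} [Fintype S] (T : S → A → S → ℝ) (γ : ℝ)
    (π : ℕ → S → A → ℝ) (H : ℕ) {i : ℕ} (h : greedy T γ π H i ≠ 0) :
    greedy T γ π H (i + 1) < greedy T γ π H i := by
  rw [greedy_succ_of_ne_zero T γ π H h]
  exact (Nat.sInf_le (feasible_pred_greedy T γ π H h)).trans_lt
    (Nat.sub_lt (Nat.pos_of_ne_zero h) one_pos)

theorem feasible_greedy_succ {S A : Type*} [Fintype S] (T : S → A → S → ℝ) (γ : ℝ)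
    (π : ℕ → S → A → ℝ) (H : ℕ) {i : ℕ} (h : greedy T γ π H i ≠ 0) :
    Feasible T γ π (greedy T γ π H (i + 1)) (greedy T γ π H i) := by
  rw [greedy_succ_of_ne_zero T γ π H h]
  have hne : {t | Feasible T γ π t (greedy T γ π H i)}.Nonempty :=
    ⟨_, feasible_pred_greedy T γ π H h⟩
  exact Nat.sInf_mem hne

theorem greedy_le_sub {S A : Type*} [Fintype S] (T : S → A → S → ℝ) (γ : ℝ)
    (π : ℕ → S → A → ℝ) (H i : ℕ) : greedy T γ π H i ≤ H - i := by
  induction i with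
  | zero => exact le_rfl
  | succ i ih =>
    by_cases h : greedy T γ π H i = 0
    · simp [greedy, h]
    · have := greedy_succ_lt T γ π H h
      omega

/-- The greedy sequence stays below every switch sequence with feasible intervals. -/
theorem greedy_le_of_feasible {S A : Type*} [Fintype S] (T : S → A → S → ℝ) (γ : ℝ)
    (π : ℕ → S → A → ℝ) {H k : ℕ} {s : ℕ → ℕ} (h0 : s 0 = H)
    (hs : ∀ i < k, Feasible T γ π (s (i + 1)) (s i)) :
    ∀ i ≤ k, greedy T γ π H i ≤ s i := by
  intro i
  induction i with
  | zero => exact fun _ => h0.ge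
  | succ i ih =>
    intro hi
    by_cases h : greedy T γ π H i = 0
    · simp [greedy, h]
    · rw [greedy_succ_of_ne_zero T γ π H h]
      exact Nat.sInf_le ((hs i hi).anti_right (ih (Nat.le_of_succ_le hi)))

/-- optimality claim of Theorem 1: the least index `k*` with
`g(k*) = 0` exists and satisfies `k* ≤ H`; (a) the greedy intervals
`[g(i+1), g(i))`, `i < k*`, partition `{0,…,H−1}` (they run from `H` down to `0`,
strictly decreasing) into `k*` intervals each feasible for `π`; (b) every
feasible switch sequence from `H` down to `0` with `k` intervals has `k ≥ k*`. -/
theorem stmt10 {S A : Type*} [Fintype S] [Fintype A] [Nonempty S] [Nonempty A]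
    (T : S → A → S → ℝ) (γ : ℝ) (H : ℕ)
    (hT : ∀ s a s', 0 ≤ T s a s') (hTsum : ∀ s a, ∑ s' : S, T s a s' = 1)
    (hγ0 : 0 ≤ γ) (hγ1 : γ ≤ 1) (hH : 1 ≤ H)
    (π : ℕ → S → A → ℝ)
    (hπpos : ∀ t < H, ∀ s a, 0 < π t s a)
    (hπsum : ∀ t < H, ∀ s, ∑ a : A, π t s a = 1) :
    ∃ kstar : ℕ, kstar ≤ H ∧
      greedy T γ π H kstar = 0 ∧ (∀ i < kstar, greedy T γ π H i ≠ 0) ∧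
      (∀ i < kstar, greedy T γ π H (i + 1) < greedy T γ π H i ∧
        Feasible T γ π (greedy T γ π H (i + 1)) (greedy T γ π H i)) ∧
      (∀ k : ℕ, 1 ≤ k → ∀ s : ℕ → ℕ, s 0 = H → s k = 0 →
        (∀ i < k, s (i + 1) < s i) →
        (∀ i < k, Feasible T γ π (s (i + 1)) (s i)) →
        kstar ≤ k) := by
  classical
  have hH0 : greedy T γ π H H = 0 := by simpa using greedy_le_sub T γ π H H
  have hex : ∃ i, greedy T γ π H i = 0 := ⟨H, hH0⟩
  refine ⟨Nat.find hex, Nat.find_min' hex hH0, Nat.find_spec hex,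
    fun i hi => Nat.find_min hex hi,
    fun i hi => ⟨greedy_succ_lt T γ π H (Nat.find_min hex hi),
      feasible_greedy_succ T γ π H (Nat.find_min hex hi)⟩, ?_⟩
  intro k _ s h0 hk _ hs
  exact Nat.find_min' hex
    (Nat.le_zero.mp (hk ▸ greedy_le_of_feasible T γ π h0 hs k le_rfl))
end

section
/- Let π be a positive policy and k ≥ 1. There exists a time-varying reward r : {0,…,H−1} × S × A → ℝ whose soft-optimal policy equals π and which has at most k − 1 switches (i.e., the number of indices t ∈ {0,…,H−2} with r_{t+1} ≠ r_t is at most k − 1) if and only if there exist k' ≤ k and natural numbers s_0 = H > s_1 > … > s_{k'} = 0 such that every interval [s_{i+1}, s_i), 0 ≤ i < k', is feasible for π. -/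
/-- Soft Q-function computed backward in time, indexed by the number of steps
remaining before the final time `H - 1`: `Qaux T γ H r k` is the soft
Q-function at time `t = H - 1 - k`. -/
noncomputable def Qaux {S A : Type*} [Fintype S] [Fintype A]
    (T : S → A → S → ℝ) (γ : ℝ) (H : ℕ) (r : ℕ → S → A → ℝ) : ℕ → S → A → ℝ
  | 0 => fun s a => r (H - 1) s a
  | (k + 1) => fun s a => r (H - 1 - (k + 1)) s a +
      γ * ∑ s' : S, T s a s' *
        Real.log (∑ a' : A, Real.exp (Qaux T γ H r k s' a'))

/-- The soft Q-function at time `t` (meaningful for `t ≤ H - 1`). -/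
noncomputable def softQ {S A : Type*} [Fintype S] [Fintype A]
    (T : S → A → S → ℝ) (γ : ℝ) (H : ℕ) (r : ℕ → S → A → ℝ)
    (t : ℕ) : S → A → ℝ :=
  Qaux T γ H r (H - 1 - t)

/-- The soft value function `V_t(s) = log Σ_a exp Q_t(s,a)`. -/
noncomputable def softV {S A : Type*} [Fintype S] [Fintype A]
    (T : S → A → S → ℝ) (γ : ℝ) (H : ℕ) (r : ℕ → S → A → ℝ)
    (t : ℕ) (s : S) : ℝ :=
  Real.log (∑ a : A, Real.exp (softQ T γ H r t s a))

/-- The soft-optimal (maximum-entropy) policy of the reward `r`. -/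
noncomputable def softPolicy {S A : Type*} [Fintype S] [Fintype A]
    (T : S → A → S → ℝ) (γ : ℝ) (H : ℕ) (r : ℕ → S → A → ℝ)
    (t : ℕ) (s : S) (a : A) : ℝ :=
  Real.exp (softQ T γ H r t s a) / ∑ a' : A, Real.exp (softQ T γ H r t s a')

section SoftRecursion

variable {S A : Type*} [Fintype S] [Fintype A] (T : S → A → S → ℝ) (γ : ℝ) (H : ℕ)
  (r : ℕ → S → A → ℝ)

theorem softQ_last (s : S) (a : A) : softQ T γ H r (H - 1) s a = r (H - 1) s a := by
  simp [softQ, Qaux]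

theorem softQ_of_succ_lt {t : ℕ} (ht : t + 1 < H) (s : S) (a : A) :
    softQ T γ H r t s a = r t s a + γ * ∑ s' : S, T s a s' * softV T γ H r (t + 1) s' := by
  have h : H - 1 - t = H - 1 - (t + 1) + 1 := by omega
  have h' : H - 1 - (H - 1 - (t + 1) + 1) = t := by omega
  simp only [softV, softQ]
  rw [h, Qaux, h']

/-- If the value `ν` satisfies the soft Bellman equation for `r` and `π` with zero
terminal value, then `log π + ν` is the soft Q-function of `r`. -/
theorem softQ_eq_of_bellman {π : ℕ → S → A → ℝ} {ν : ℕ → S → ℝ}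
    (hπpos : ∀ t < H, ∀ s a, 0 < π t s a) (hπsum : ∀ t < H, ∀ s, ∑ a : A, π t s a = 1)
    (hν : ν H = 0)
    (hr : ∀ t < H, ∀ s a, r t s a =
      Real.log (π t s a) - γ * (∑ s' : S, T s a s' * ν (t + 1) s') + ν t s)
    {t : ℕ} (ht : t < H) (s : S) (a : A) :
    softQ T γ H r t s a = Real.log (π t s a) + ν t s := by
  induction h : H - 1 - t generalizing t s a with
  | zero =>
    obtain rfl : t = H - 1 := by omega
    rw [softQ_last, hr _ ht, Nat.sub_add_cancel (by omega), hν]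
    simp
  | succ n ih =>
    have hlt : t + 1 < H := by omega
    have hV (s' : S) : softV T γ H r (t + 1) s' = ν (t + 1) s' := by
      have hexp (a' : A) : Real.exp (softQ T γ H r (t + 1) s' a') =
          π (t + 1) s' a' * Real.exp (ν (t + 1) s') := by
        rw [ih hlt s' a' (by omega), Real.exp_add, Real.exp_log (hπpos _ hlt _ _)]
      simp only [softV, hexp, ← Finset.sum_mul, hπsum _ hlt, one_mul, Real.log_exp]
    simp only [softQ_of_succ_lt T γ H r hlt, hV, hr t ht]
    ring

theorem softPolicy_eq_of_bellman {π : ℕ → S → A → ℝ} {ν : ℕ → S → ℝ}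
    (hπpos : ∀ t < H, ∀ s a, 0 < π t s a) (hπsum : ∀ t < H, ∀ s, ∑ a : A, π t s a = 1)
    (hν : ν H = 0)
    (hr : ∀ t < H, ∀ s a, r t s a =
      Real.log (π t s a) - γ * (∑ s' : S, T s a s' * ν (t + 1) s') + ν t s)
    {t : ℕ} (ht : t < H) (s : S) (a : A) :
    softPolicy T γ H r t s a = π t s a := by
  have hexp (a' : A) : Real.exp (softQ T γ H r t s a') = π t s a' * Real.exp (ν t s) := by
    rw [softQ_eq_of_bellman T γ H r hπpos hπsum hν hr ht, Real.exp_add,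
      Real.exp_log (hπpos _ ht _ _)]
  simp only [softPolicy, hexp, ← Finset.sum_mul, hπsum _ ht, one_mul]
  exact mul_div_cancel_right₀ _ (Real.exp_ne_zero _)

/-- The soft value function, extended by zero at the horizon, satisfies the Bellman equation for the
soft-optimal policy. -/
theorem bellman_of_softPolicy_eq [Nonempty A] {π : ℕ → S → A → ℝ}
    (hπ : ∀ t < H, ∀ s a, softPolicy T γ H r t s a = π t s a)
    {t : ℕ} (ht : t < H) (s : S) (a : A) :
    r t s a = Real.log (π t s a)
      - γ * (∑ s' : S, T s a s' * (if t + 1 < H then softV T γ H r (t + 1) s' else 0))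
      + (if t < H then softV T γ H r t s else 0) := by
  have hsum : 0 < ∑ a' : A, Real.exp (softQ T γ H r t s a') :=
    Finset.sum_pos (fun _ _ => Real.exp_pos _) Finset.univ_nonempty
  have hlog : Real.log (π t s a) = softQ T γ H r t s a - softV T γ H r t s := by
    rw [← hπ t ht, softPolicy, Real.log_div (Real.exp_ne_zero _) hsum.ne', Real.log_exp, softV]
  rw [hlog, if_pos ht]
  by_cases hlt : t + 1 < H
  · simp only [if_pos hlt, softQ_of_succ_lt T γ H r hlt]
    ring
  · obtain rfl : t = H - 1 := by omega
    simp [hlt, softQ_last]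

end SoftRecursion

/-- Shifting every value function by the same time-independent amount turns a certificate into one
with any prescribed terminal value. -/
theorem Feasible.exists_isCert {S A : Type*} [Fintype S] {T : S → A → S → ℝ} {γ : ℝ}
    {π : ℕ → S → A → ℝ} {i j : ℕ} (h : Feasible T γ π i j) (νo : S → ℝ) :
    ∃ (r : S → A → ℝ) (ν : ℕ → S → ℝ), IsCert T γ π i j νo r ν := by
  obtain ⟨μ, r, ν, hμ, hr⟩ := h
  refine ⟨fun s a => r s a + (νo s - μ s) - γ * ∑ s' : S, T s a s' * (νo s' - μ s'),
    fun t s => ν t s + (νo s - μ s), fun s => by simp [hμ], fun t hit htj s a => ?_⟩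
  simp only [hr t hit htj s a, mul_add (T _ _ _), Finset.sum_add_distrib]
  ring

/-- Feasible adjacent intervals glue to a single reward that switches only at the breakpoints. -/
theorem exists_bellman_of_feasible {S A : Type*} [Fintype S] {T : S → A → S → ℝ} {γ : ℝ}
    {π : ℕ → S → A → ℝ} (s : ℕ → ℕ) (k : ℕ) (hs : ∀ i < k, s (i + 1) < s i)
    (hf : ∀ i < k, Feasible T γ π (s (i + 1)) (s i)) :
    ∃ (r : ℕ → S → A → ℝ) (ν : ℕ → S → ℝ), ν (s 0) = 0 ∧
      (∀ t, s k ≤ t → t < s 0 → ∀ x a, r t x a =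
        Real.log (π t x a) - γ * (∑ x' : S, T x a x' * ν (t + 1) x') + ν t x) ∧
      ∀ t, s k ≤ t → t + 1 < s 0 → r (t + 1) ≠ r t → ∃ i, 1 ≤ i ∧ i < k ∧ t + 1 = s i := by
  induction k with
  | zero => exact ⟨0, 0, rfl, fun t h h' => by omega, fun t h h' => by omega⟩
  | succ k ih =>
    obtain ⟨r, ν, hν, hr, hsw⟩ := ih (fun i hi => hs i (by omega)) (fun i hi => hf i (by omega))
    obtain ⟨ρ, μ, hμ, hρ⟩ := (hf k (by omega)).exists_isCert (ν (s k))
    have hk0 : s k ≤ s 0 := by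
      have hanti : ∀ j ≤ k, s j ≤ s 0 := by
        intro j hj
        induction j with
        | zero => exact le_rfl
        | succ j ihj => exact (hs j (by omega)).le.trans (ihj (by omega))
      exact hanti k le_rfl
    refine ⟨fun t => if t < s k then ρ else r t, fun t => if t < s k then μ t else ν t,
      by simp [hk0.not_gt, hν], fun t ht ht0 x a => ?_, fun t ht ht0 hne => ?_⟩
    · by_cases htk : t < s k
      · have hnext : (if t + 1 < s k then μ (t + 1) else ν (t + 1)) = μ (t + 1) := by
          split_ifs with h
          · rfl
          · obtain h' : t + 1 = s k := by omega
            rw [h']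
            exact (funext hμ).symm
        simp only [if_pos htk, hnext]
        exact hρ t ht htk x a
      · have hnext : ¬ t + 1 < s k := by omega
        simp only [if_neg htk, if_neg hnext]
        exact hr t (by omega) ht0 x a
    · rcases lt_trichotomy (t + 1) (s k) with h | h | h
      · have htk : t < s k := by omega
        simp [h, htk] at hne
      · refine ⟨k, Nat.one_le_iff_ne_zero.mpr ?_, by omega, h⟩
        rintro rfl
        omega
      · have h₁ : ¬ t + 1 < s k := by omega
        have h₂ : ¬ t < s k := by omega
        simp only [if_neg h₁, if_neg h₂] at hne
        obtain ⟨i, hi1, hik, hi⟩ := hsw t (by omega) ht0 hne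
        exact ⟨i, hi1, by omega, hi⟩

open Classical in
/-- A sequence on `{0,…,m}` splits into at most one more constant block than it has switches. -/
theorem exists_constant_blocks {X : Type*} (r : ℕ → X) (m : ℕ) :
    ∃ (k : ℕ) (s : ℕ → ℕ), k ≤ ((Finset.range m).filter fun t => r (t + 1) ≠ r t).card + 1 ∧
      s 0 = m + 1 ∧ s k = 0 ∧ (∀ i < k, s (i + 1) < s i) ∧
      ∀ i < k, ∀ t, s (i + 1) ≤ t → t < s i → r t = r (s (i + 1)) := by
  induction m with
  | zero =>
    refine ⟨1, fun i => 1 - i, by simp, rfl, rfl, fun i hi => ?_, fun i hi t _ ht => ?_⟩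
    · dsimp only
      omega
    · dsimp only at ht ⊢
      congr 1
      omega
  | succ m ih =>
    obtain ⟨k, s, hk, hs0, hsk, hs, hc⟩ := ih
    rw [Finset.range_add_one, Finset.filter_insert]
    by_cases hne : r (m + 1) ≠ r m
    · refine ⟨k + 1, fun i => Nat.casesOn i (m + 2) s, ?_, rfl, hsk, ?_, ?_⟩
      · rw [if_pos hne, Finset.card_insert_of_notMem (by simp)]
        omega
      · rintro (_ | i) hi
        · simp [hs0]
        · exact hs i (by omega)
      · rintro (_ | i) hi t h1 h2
        · change s 0 ≤ t at h1
          change t < m + 2 at h2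
          change r t = r (s 0)
          congr 1
          omega
        · exact hc i (by omega) t h1 h2
    · obtain ⟨k, rfl⟩ : ∃ l, k = l + 1 :=
        Nat.exists_eq_succ_of_ne_zero (by rintro rfl; omega)
      refine ⟨k + 1, fun i => Nat.casesOn i (m + 2) fun j => s (j + 1), ?_, rfl, hsk, ?_, ?_⟩
      · rwa [if_neg hne]
      · rintro (_ | i) hi
        · have := hs 0 hi
          change s (0 + 1) < m + 2
          omega
        · exact hs (i + 1) hi
      · rintro (_ | i) hi t h1 h2
        · have hlt := hs 0 hi
          change s (0 + 1) ≤ t at h1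
          change t < m + 2 at h2
          change r t = r (s (0 + 1))
          rcases Nat.lt_or_ge t (m + 1) with h | h
          · exact hc 0 hi t h1 (by omega)
          · obtain rfl : t = m + 1 := by omega
            rw [not_not.mp hne]
            exact hc 0 hi m (by omega) (by omega)
        · exact hc (i + 1) hi t h1 h2

/-- there is a time-varying reward whose soft-optimal policy is `π`
with at most `k − 1` switches iff there is a partition of `{0,…,H−1}` into
`k' ≤ k` intervals, each feasible for `π`. -/
theorem stmt11 {S A : Type*} [Fintype S] [Fintype A] [Nonempty S] [Nonempty A]
    (T : S → A → S → ℝ) (γ : ℝ) (H : ℕ)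
    (hT : ∀ s a s', 0 ≤ T s a s') (hTsum : ∀ s a, ∑ s' : S, T s a s' = 1)
    (hγ0 : 0 ≤ γ) (hγ1 : γ ≤ 1) (hH : 1 ≤ H)
    (π : ℕ → S → A → ℝ)
    (hπpos : ∀ t < H, ∀ s a, 0 < π t s a)
    (hπsum : ∀ t < H, ∀ s, ∑ a : A, π t s a = 1)
    (k : ℕ) (hk : 1 ≤ k) :
    (∃ r : ℕ → S → A → ℝ,
      (∀ t < H, ∀ s a, softPolicy T γ H r t s a = π t s a) ∧
      {t : ℕ | t + 1 < H ∧ r (t + 1) ≠ r t}.ncard ≤ k - 1) ↔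
    (∃ k' ≤ k, ∃ s : ℕ → ℕ, s 0 = H ∧ s k' = 0 ∧
      (∀ i < k', s (i + 1) < s i) ∧
      ∀ i < k', Feasible T γ π (s (i + 1)) (s i)) := by
  classical
  constructor
  · rintro ⟨r, hr, hcard⟩
    obtain ⟨k', s, hk', hs0, hsk, hs, hc⟩ := exists_constant_blocks r (H - 1)
    rw [← Set.ncard_coe_finset, Finset.coe_filter] at hk'
    simp only [Finset.mem_range, Nat.lt_sub_iff_add_lt] at hk'
    have hle : ∀ i ≤ k', s i ≤ H := by
      intro i hi
      induction i with
      | zero => omega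
      | succ i ih => exact (hs i hi).le.trans (ih (by omega))
    refine ⟨k', by omega, s, by omega, hsk, hs, fun i hi => ?_⟩
    refine ⟨_, r (s (i + 1)), fun t x => if t < H then softV T γ H r t x else 0,
      fun _ => rfl, fun t h1 h2 x a => ?_⟩
    rw [← hc i hi t h1 h2]
    exact bellman_of_softPolicy_eq T γ H r hr (h2.trans_le (hle i hi.le)) x a
  · rintro ⟨k', hk', s, hs0, hsk, hs, hf⟩
    obtain ⟨r, ν, hν, hr, hsw⟩ := exists_bellman_of_feasible s k' hs hf
    rw [hs0] at hν hr hsw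
    rw [hsk] at hr hsw
    refine ⟨r, fun t ht x a => softPolicy_eq_of_bellman T γ H r hπpos hπsum hν
      (fun t ht => hr t (Nat.zero_le t) ht) ht x a, ?_⟩
    have hsub : {t : ℕ | t + 1 < H ∧ r (t + 1) ≠ r t} ⊆
        ((Finset.Ico 1 k').image fun i => s i - 1 : Finset ℕ) := by
      rintro t ⟨ht, hne⟩
      obtain ⟨i, hi1, hik, hi⟩ := hsw t (Nat.zero_le t) ht hne
      simp only [Finset.coe_image, Set.mem_image, Finset.coe_Ico, Set.mem_Ico]
      exact ⟨i, ⟨hi1, hik⟩, by omega⟩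
    calc _ ≤ ((Finset.Ico 1 k').image fun i => s i - 1).card := by
            rw [← Set.ncard_coe_finset]
            exact Set.ncard_le_ncard hsub (Finset.finite_toSet _)
      _ ≤ (Finset.Ico 1 k').card := Finset.card_image_le
      _ ≤ k - 1 := by
            rw [Nat.card_Ico]
            omega
end
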